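/- A full-support stochastic choice correspondence μ has an Independent Choice representation if and only if it has both a Logit representation and a Random Categorization representation. -/

import Mathlib

open Finset

variable {X : Type*} [Fintype X] [DecidableEq X]

def IsSCC (μ : Finset X → Finset X → ℝ) : Prop :=
  (∀ T S : Finset X, T ⊆ S → 0 ≤ μ T S ∧ μ T S ≤ 1) ∧
  (∀ S : Finset X, S.Nonempty →
      ∑ T ∈ S.powerset.filter (fun T => T.Nonempty), μ T S = 1) ∧
  (∀ T S : Finset X, ¬ T ⊆ S → μ T S = 0)

def FullSupport (μ : Finset X → Finset X → ℝ) : Prop :=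
  ∀ T S : Finset X, T.Nonempty → T ⊆ S → 0 < μ T S

def LogitRep (μ : Finset X → Finset X → ℝ) : Prop :=
  ∃ π : Finset X → ℝ,
    (∀ T : Finset X, T.Nonempty → 0 < π T) ∧
    ∀ T S : Finset X, T.Nonempty → T ⊆ S →
      μ T S = π T / ∑ T' ∈ S.powerset.filter (fun T' => T'.Nonempty), π T'

noncomputable def rcgVal (m : Finset X → ℝ) (T S : Finset X) : ℝ :=
  (∑ C : Finset X, if T = C ∩ S then m C else 0) /
    ∑ C ∈ Finset.univ.filter (fun C : Finset X => (C ∩ S).Nonempty), m C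

def RCGRep (μ : Finset X → Finset X → ℝ) : Prop :=
  ∃ m : Finset X → ℝ,
    (∀ C, 0 ≤ m C) ∧ m ∅ = 0 ∧ (∑ C : Finset X, m C = 1) ∧
    (∀ x : X, ∃ C : Finset X, x ∈ C ∧ 0 < m C) ∧
    ∀ T S : Finset X, T.Nonempty → T ⊆ S → μ T S = rcgVal m T S

def ICRep (μ : Finset X → Finset X → ℝ) : Prop :=
  ∃ γ : X → ℝ,
    (∀ x, 0 < γ x ∧ γ x < 1) ∧
    ∀ T S : Finset X, T.Nonempty → T ⊆ S →
      μ T S = ((∏ x ∈ T, γ x) * ∏ y ∈ S \ T, (1 - γ y))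
        / (1 - ∏ z ∈ S, (1 - γ z))

lemma ic_num (γ : X → ℝ) (hγ : ∀ x, 0 < γ x ∧ γ x < 1) (T S : Finset X) (h : T ⊆ S) :
    (∏ x ∈ T, γ x) * ∏ y ∈ S \ T, (1 - γ y)
      = (∏ x ∈ T, γ x / (1 - γ x)) * ∏ y ∈ S, (1 - γ y) := by
  rw [← Finset.prod_sdiff h, Finset.prod_div_distrib]
  have : ∏ x ∈ T, (1 - γ x) ≠ 0 :=
    Finset.prod_ne_zero_iff.mpr fun x _ => by linarith [(hγ x).2]
  field_simp

lemma sum_nonempty (a : X → ℝ) (S : Finset X) :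
    ∑ T ∈ S.powerset.filter (fun T => T.Nonempty), ∏ x ∈ T, a x = ∏ x ∈ S, (1 + a x) - 1 := by
  rw [Finset.prod_one_add]
  have h : S.powerset.filter (fun T => T.Nonempty) = S.powerset.erase ∅ := by
    ext T
    simp [Finset.nonempty_iff_ne_empty, and_comm]
  rw [h, ← Finset.sum_erase_add S.powerset _ (Finset.empty_mem_powerset S)]
  simp

lemma ic_sum (γ : X → ℝ) (hγ : ∀ x, 0 < γ x ∧ γ x < 1) (S : Finset X) :
    (∑ T ∈ S.powerset.filter (fun T => T.Nonempty), ∏ x ∈ T, γ x / (1 - γ x))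
      * ∏ y ∈ S, (1 - γ y) = 1 - ∏ y ∈ S, (1 - γ y) := by
  rw [sum_nonempty, sub_mul, ← Finset.prod_mul_distrib, one_mul]
  congr 1
  apply Finset.prod_eq_one
  intro x _
  have : 1 - γ x ≠ 0 := by linarith [(hγ x).2]
  field_simp
  ring

lemma marg (γ : X → ℝ) (T S : Finset X) (h : T ⊆ S) :
    (∑ C : Finset X, if T = C ∩ S then (∏ x ∈ C, γ x) * ∏ y ∈ univ \ C, (1 - γ y) else 0)
      = (∏ x ∈ T, γ x) * ∏ y ∈ S \ T, (1 - γ y) := by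
  have h1 : ∑ D ∈ (univ \ S).powerset,
      (∏ x ∈ D, γ x) * ∏ y ∈ (univ \ S) \ D, (1 - γ y) = 1 := by
    rw [← Finset.prod_add]
    simp
  have h2 := congrArg (fun t => ((∏ x ∈ T, γ x) * ∏ y ∈ S \ T, (1 - γ y)) * t) h1
  simp only [mul_one] at h2
  rw [← Finset.sum_filter, ← h2, Finset.mul_sum]
  symm
  apply Finset.sum_bij' (fun D _ => T ∪ D) (fun C _ => C \ S)
  · intro D hD
    simp only [Finset.mem_filter, Finset.mem_univ, true_and]
    rw [Finset.mem_powerset] at hD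
    ext x
    have := @h x
    have := @hD x
    simp at *
    tauto
  · intro C _
    rw [Finset.mem_powerset]
    intro x
    simp
  · intro D hD
    rw [Finset.mem_powerset] at hD
    ext x
    have := @h x
    have := @hD x
    simp at *
    tauto
  · intro C hC
    simp only [Finset.mem_filter, Finset.mem_univ, true_and] at hC
    rw [hC]
    ext x
    simp
    tauto
  · intro D hD
    rw [Finset.mem_powerset] at hD
    have hd : Disjoint T D := by
      rw [Finset.disjoint_left]
      intro x hx hx'
      have := hD hx'
      simp at this
      exact this (h hx)
    have hd2 : Disjoint (S \ T) ((univ \ S) \ D) := by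
      rw [Finset.disjoint_left]
      intro x
      simp
      tauto
    have he : univ \ (T ∪ D) = (S \ T) ∪ ((univ \ S) \ D) := by
      ext x
      have := @h x
      have := @hD x
      simp at *
      tauto
    rw [he, Finset.prod_union hd, Finset.prod_union hd2]
    ring

lemma ic_logit (μ : Finset X → Finset X → ℝ) (h : ICRep μ) : LogitRep μ := by
  obtain ⟨γ, hγ, h⟩ := h
  refine ⟨fun T => ∏ x ∈ T, γ x / (1 - γ x), ?_, ?_⟩
  · intro T _
    exact Finset.prod_pos fun x _ => div_pos (hγ x).1 (by linarith [(hγ x).2])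
  · intro T S hT hTS
    have hp : ∏ y ∈ S, (1 - γ y) ≠ 0 :=
      Finset.prod_ne_zero_iff.mpr fun x _ => by linarith [(hγ x).2]
    rw [h T S hT hTS, ic_num γ hγ T S hTS, ← ic_sum γ hγ S, mul_div_mul_right _ _ hp]

lemma ic_rcg [Nonempty X] (μ : Finset X → Finset X → ℝ) (h : ICRep μ) : RCGRep μ := by
  obtain ⟨γ, hγ, h⟩ := h
  set w : Finset X → ℝ := fun C => (∏ x ∈ C, γ x) * ∏ y ∈ univ \ C, (1 - γ y) with hw
  have wpos : ∀ C, 0 < w C := fun C => mul_pos (Finset.prod_pos fun x _ => (hγ x).1)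
    (Finset.prod_pos fun x _ => by linarith [(hγ x).2])
  have wsum : ∑ C, w C = 1 := by
    have := marg γ ∅ ∅ (Finset.Subset.refl _)
    simpa [hw] using this
  set Z : ℝ := 1 - w ∅ with hZ
  have hsplit : ∑ C, (if C = ∅ then 0 else w C) = Z := by
    have : ∑ C, (if C = ∅ then 0 else w C) + ∑ C, (if C = ∅ then w C else 0) = ∑ C, w C := by
      rw [← Finset.sum_add_distrib]
      apply Finset.sum_congr rfl
      intro C _
      split_ifs <;> simp
    rw [wsum] at this
    simp only [Finset.sum_ite_eq', Finset.mem_univ, if_true] at this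
    linarith
  have Zpos : 0 < Z := by
    rw [← hsplit]
    apply Finset.sum_pos'
    · intro C _
      split_ifs
      · exact le_rfl
      · exact (wpos C).le
    · obtain ⟨x⟩ := ‹Nonempty X›
      exact ⟨{x}, Finset.mem_univ _, by simpa using wpos {x}⟩
  refine ⟨fun C => (if C = ∅ then 0 else w C) / Z, ?_, ?_, ?_, ?_, ?_⟩
  · intro C
    apply div_nonneg _ Zpos.le
    split_ifs
    · exact le_rfl
    · exact (wpos C).le
  · simp
  · rw [← Finset.sum_div, hsplit, div_self Zpos.ne']
  · intro x
    exact ⟨{x}, by simp, by simpa using div_pos (wpos {x}) Zpos⟩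
  · intro T S hT hTS
    rw [h T S hT hTS, rcgVal]
    have e1 : (∑ C : Finset X, if T = C ∩ S then (if C = ∅ then 0 else w C) / Z else 0)
        = ((∏ x ∈ T, γ x) * ∏ y ∈ S \ T, (1 - γ y)) / Z := by
      rw [← marg γ T S hTS, Finset.sum_div]
      apply Finset.sum_congr rfl
      intro C _
      by_cases hc : T = C ∩ S
      · have : C ≠ ∅ := by
          rintro rfl
          simp at hc
          simp [hc] at hT
        simp [← hc, this, hw]
      · simp [hc]
    have e2 : ∑ C ∈ Finset.univ.filter (fun C : Finset X => (C ∩ S).Nonempty),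
        (if C = ∅ then 0 else w C) / Z = (1 - ∏ z ∈ S, (1 - γ z)) / Z := by
      rw [← Finset.sum_div]
      congr 1
      have m0 := marg γ ∅ S (Finset.empty_subset _)
      simp only [Finset.prod_empty, one_mul, Finset.sdiff_empty] at m0
      have e3 : 1 - ∏ z ∈ S, (1 - γ z) = ∑ C, w C - ∏ z ∈ S, (1 - γ z) := by rw [wsum]
      rw [e3, ← m0, ← Finset.sum_sub_distrib, Finset.sum_filter]
      apply Finset.sum_congr rfl
      intro C _
      by_cases hc : C ∩ S = ∅
      · simp [hc, hw]
      · have : C ≠ ∅ := by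
          rintro rfl
          simp at hc
        simp [this, Finset.nonempty_iff_ne_empty, hc, Ne.symm hc]
    rw [e1, e2, div_div_div_cancel_right₀ Zpos.ne']

lemma key (μ : Finset X → Finset X → ℝ) (π : Finset X → ℝ) (m : Finset X → ℝ)
    (hfs : FullSupport μ) (hπ : ∀ T : Finset X, T.Nonempty → 0 < π T)
    (h : ∀ T S : Finset X, T.Nonempty → T ⊆ S →
      μ T S = π T / ∑ T' ∈ S.powerset.filter (fun T' => T'.Nonempty), π T')
    (h0 : m ∅ = 0) (h1 : ∑ C : Finset X, m C = 1)
    (hm : ∀ T S : Finset X, T.Nonempty → T ⊆ S → μ T S = rcgVal m T S) (x : X) :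
    ∃ a : ℝ, ∀ T : Finset X, T.Nonempty → x ∉ T → π (insert x T) = a * π T := by
  set P := ∑ T' ∈ (univ : Finset X).powerset.filter (fun T' => T'.Nonempty), π T' with hP
  set S : Finset X := univ.erase x with hS
  set Q := ∑ T' ∈ S.powerset.filter (fun T' => T'.Nonempty), π T' with hQ
  set A := ∑ C ∈ Finset.univ.filter (fun C : Finset X => (C ∩ S).Nonempty), m C with hA
  have hm1 : ∀ T : Finset X, T.Nonempty → m T = π T / P := by
    intro T hT
    rw [← h T univ hT (Finset.subset_univ _), hm T univ hT (Finset.subset_univ _), rcgVal]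
    have : ∑ C ∈ Finset.univ.filter (fun C : Finset X => (C ∩ univ).Nonempty), m C = 1 := by
      rw [← h1, Finset.sum_filter]
      apply Finset.sum_congr rfl
      intro C _
      by_cases hc : C = ∅
      · simp [hc, h0]
      · simp [Finset.nonempty_iff_ne_empty, hc]
    rw [this]
    simp
  refine ⟨P * (A / Q) - 1, fun T hT hx => ?_⟩
  have hPpos : 0 < P := Finset.sum_pos (fun T' hT' => hπ T' (Finset.mem_filter.mp hT').2)
    ⟨T, by simp [hT]⟩
  have hTS : T ⊆ S := by
    intro y hy
    simp only [hS, Finset.mem_erase, Finset.mem_univ, and_true]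
    rintro rfl
    exact hx hy
  have e := hm T S hT hTS
  have epos := hfs T S hT hTS
  have eπ := h T S hT hTS
  rw [rcgVal] at e
  have hsum : (∑ C : Finset X, if T = C ∩ S then m C else 0) = m T + m (insert x T) := by
    have hne : T ≠ insert x T := fun hh => hx (hh ▸ Finset.mem_insert_self x T)
    rw [← Finset.sum_filter, ← Finset.sum_pair hne]
    apply Finset.sum_congr _ (fun _ _ => rfl)
    ext C
    simp only [Finset.mem_filter, Finset.mem_univ, true_and, Finset.mem_insert,
      Finset.mem_singleton]
    have hCS : C ∩ S = C.erase x := by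
      ext y
      simp [hS, and_comm]
    rw [hCS]
    constructor
    · intro hh
      by_cases hc : x ∈ C
      · right
        rw [hh, Finset.insert_erase hc]
      · left
        rw [hh, Finset.erase_eq_of_notMem hc]
    · rintro (rfl | rfl)
      · rw [Finset.erase_eq_of_notMem hx]
      · rw [Finset.erase_insert hx]
  rw [hsum, ← hA, hm1 T hT, hm1 _ (Finset.insert_nonempty x T)] at e
  have hA0 : A ≠ 0 := by
    intro hh
    rw [hh, div_zero] at e
    linarith
  rw [← hQ, e] at eπ
  rw [div_eq_iff hA0] at eπ
  have hP0 := hPpos.ne'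
  have : π T + π (insert x T) = P * (A / Q) * π T := by
    calc π T + π (insert x T) = P * (π T / P + π (insert x T) / P) := by field_simp
      _ = _ := by rw [eπ]; ring
  linarith

lemma logit_rcg_ic [Nontrivial X] (μ : Finset X → Finset X → ℝ) (hfs : FullSupport μ)
    (hl : LogitRep μ) (hr : RCGRep μ) : ICRep μ := by
  obtain ⟨π, hπ, h⟩ := hl
  obtain ⟨m, -, h0, h1, -, hm⟩ := hr
  choose a ha using key μ π m hfs hπ h h0 h1 hm
  have apos : ∀ x, 0 < a x := by
    intro x
    obtain ⟨y, hy⟩ := exists_ne x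
    have e := ha x {y} (Finset.singleton_nonempty y) (by simpa using hy.symm)
    have p1 := hπ _ (Finset.insert_nonempty x {y})
    have p2 := hπ _ (Finset.singleton_nonempty y)
    rw [e] at p1
    exact pos_of_mul_pos_left p1 p2.le
  obtain ⟨x0⟩ : Nonempty X := inferInstance
  set c := π {x0} / a x0 with hc
  have cpos : 0 < c := div_pos (hπ _ (Finset.singleton_nonempty _)) (apos x0)
  have hsing : ∀ x, π {x} = c * a x := by
    intro x
    have p0 := (apos x0).ne'
    by_cases hx : x = x0
    · subst hx
      rw [hc]
      field_simp
    · have e1 := ha x {x0} (Finset.singleton_nonempty _) (by simpa using hx)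
      have e2 := ha x0 {x} (Finset.singleton_nonempty _) (by simpa using Ne.symm hx)
      rw [Finset.pair_comm, e1] at e2
      rw [hc]
      field_simp
      linarith
  have hprod : ∀ T : Finset X, T.Nonempty → π T = c * ∏ x ∈ T, a x := by
    intro T hT
    induction hT using Finset.Nonempty.cons_induction with
    | singleton x => simpa using hsing x
    | cons x s hx hs ih =>
      rw [Finset.cons_eq_insert, ha x s hs hx, ih, Finset.prod_insert hx]
      ring
  have hγ : ∀ x, 0 < a x / (1 + a x) ∧ a x / (1 + a x) < 1 := by
    intro x
    have := apos x
    refine ⟨by positivity, ?_⟩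
    rw [div_lt_one (by positivity)]
    linarith
  have hγa : ∀ x, a x / (1 + a x) / (1 - a x / (1 + a x)) = a x := by
    intro x
    have h2 : 1 + a x ≠ 0 := by linarith [apos x]
    have h3 : 1 - a x / (1 + a x) = 1 / (1 + a x) := by
      field_simp
      ring
    rw [h3]
    field_simp
  refine ⟨fun x => a x / (1 + a x), hγ, ?_⟩
  intro T S hT hTS
  have hp : ∏ y ∈ S, (1 - a y / (1 + a y)) ≠ 0 :=
    Finset.prod_ne_zero_iff.mpr fun x _ => by linarith [(hγ x).2]
  rw [ic_num _ hγ T S hTS, ← ic_sum _ hγ S, mul_div_mul_right _ _ hp, h T S hT hTS]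
  simp only [hγa]
  rw [hprod T hT, Finset.sum_congr rfl
    (fun T' hT' => hprod T' (Finset.mem_filter.mp hT').2), ← Finset.mul_sum,
    mul_div_mul_left _ _ cpos.ne']

theorem ic_iff_logit_and_rcg (μ : Finset X → Finset X → ℝ)
    (hcard : 3 ≤ Fintype.card X) (hμ : IsSCC μ) (hfs : FullSupport μ) :
    ICRep μ ↔ LogitRep μ ∧ RCGRep μ := by
  have : Nontrivial X := Fintype.one_lt_card_iff_nontrivial.mp (by omega)
  exact ⟨fun h => ⟨ic_logit μ h, ic_rcg μ h⟩, fun h => logit_rcg_ic μ hfs h.1 h.2⟩
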